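/- Let (τ_i)_{1≤i≤σ_n} be independent critical geometric Galton–Watson trees and suppose σ_n = o(√n). Then, conditionally on Σ_{i=1}^{σ_n} |τ_i| = n, the probability that there exists a unique index i with |τ_i| ≥ (1−δ)n tends to 1 as first n → ∞ and then δ ↓ 0; i.e., liminf_{δ↓0} liminf_{n→∞} P(∃! i : |τ_i| ≥ (1−δ)n | Σ|τ_i| = n) = 1. -/

import Mathlib

open scoped ENNReal Classical
open Filter

/-- Finite rooted plane trees. -/
inductive PTree : Type
  | node : List PTree → PTree

mutual
  /-- The number of edges of a plane tree. -/
  def PTree.edges : PTree → ℕ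
    | .node ts => ts.length + PTree.edgesList ts
  /-- The total number of edges of a list of plane trees. -/
  def PTree.edgesList : List PTree → ℕ
    | [] => 0
    | t :: ts => PTree.edges t + PTree.edgesList ts
end

mutual
  /-- The law of the critical geometric Galton–Watson tree: `P(τ = t) = ∏_v 2^{-c(v)-1}`. -/
  noncomputable def gwProb : PTree → ℝ≥0∞
    | .node ts => (2 : ℝ≥0∞)⁻¹ ^ (ts.length + 1) * gwProbList ts
  /-- Product of `gwProb` over a list of trees. -/
  noncomputable def gwProbList : List PTree → ℝ≥0∞
    | [] => 1
    | t :: ts => gwProb t * gwProbList ts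
end

/-- Mass of a forest of `m` independent critical geometric Galton–Watson trees. -/
noncomputable def forestMass {m : ℕ} (f : Fin m → PTree) : ℝ≥0∞ :=
  ∏ i, gwProb (f i)

/-- Conditional probability, given that `σ` independent critical geometric Galton–Watson trees
have `n` edges in total, that there is a unique index `i` with `|τ_i| ≥ (1-δ)n`. -/
noncomputable def condProbUniqueBig (σ n : ℕ) (δ : ℝ) : ℝ≥0∞ :=
  (∑' f : Fin σ → PTree,
      if (∃! i : Fin σ, (1 - δ) * (n : ℝ) ≤ ((f i).edges : ℝ)) ∧ (∑ i, (f i).edges) = n then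
        forestMass f else 0) /
    ∑' f : Fin σ → PTree, if (∑ i, (f i).edges) = n then forestMass f else 0

/-!
Cutting off the first subtree of the first root turns a forest with `s` trees into one with `s + 1`
trees and one edge fewer. This recursion gives the Otter–Dwass formula: the number of forests with
`s` trees and `n` edges is the ballot number `s / (2n + s) * C(2n + s, n)`, each such forest having
probability `2 ^ (-(2n + s))`. Hence `P(|τ₁| + ⋯ + |τ_s| = n) ≤ s * P(|τ| = n)`, and the tail
`P(|τ| ≥ n) = C(2n, n) / 4 ^ n` is at most `1 / √(2n + 1)`.

For `k < n / 2`, at most one tree can contain all but `k` of the `n` edges. The tree with a given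
index does so with probability at least `P(|τ| = n) * P(|τ₁| + ⋯ + |τ_{s-1}| ≤ k)`, because
`P(|τ| = m)` decreases in `m`. Summing over the `s` indices and dividing by
`P(|τ₁| + ⋯ + |τ_s| = n)`, the conditional probability is at least
`P(|τ₁| + ⋯ + |τ_{s-1}| ≤ k) ≥ 1 - s * P(|τ| > k) ≥ 1 - s / √k`. Take `k = ⌊δn⌋`.
-/

open scoped NNReal

/-- The number of plane forests with `s` trees and `n` edges. The recursion deletes the root of the
first tree if it is a leaf, and otherwise cuts off the first subtree of that root. -/
def ballotNumber : ℕ → ℕ → ℕ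
  | _, 0 => 1
  | 0, _ + 1 => 0
  | s + 1, n + 1 => ballotNumber s (n + 1) + ballotNumber (s + 2) n
termination_by s n => (n, s)

theorem add_mul_ballotNumber (s n : ℕ) :
    (2 * n + s) * ballotNumber s n = s * (2 * n + s).choose n := by
  fun_induction ballotNumber s n with
  | case1 => simp
  | case2 => simp
  | case3 s n ih₁ ih₂ =>
    have pascal : (2 * n + s + 3).choose (n + 1) =
        (2 * n + s + 2).choose n + (2 * n + s + 2).choose (n + 1) :=
      Nat.choose_succ_succ _ _
    have absorption : (2 * n + s + 2).choose (n + 1) * (n + 1) =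
        (2 * n + s + 2).choose n * (n + s + 2) := by
      rw [Nat.choose_succ_right_eq]
      congr 1
      omega
    rw [show 2 * (n + 1) + s = 2 * n + s + 2 by ring] at ih₁
    rw [show 2 * n + (s + 2) = 2 * n + s + 2 by ring] at ih₂
    rw [show 2 * (n + 1) + (s + 1) = 2 * n + s + 3 by ring, pascal]
    apply Nat.eq_of_mul_eq_mul_left (show 0 < 2 * n + s + 2 by omega)
    simp only [Nat.succ_eq_add_one]
    linear_combination (2 * n + s + 3) * (ih₁ + ih₂) - 2 * absorption

theorem ballotNumber_succ_pos (s n : ℕ) : 0 < ballotNumber (s + 1) n := by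
  have h : 0 < (s + 1) * (2 * n + (s + 1)).choose n :=
    Nat.mul_pos s.succ_pos (Nat.choose_pos (by omega))
  rw [← add_mul_ballotNumber] at h
  exact Nat.pos_of_mul_pos_left h

theorem choose_succ_le_two_mul_choose {m k : ℕ} (h : 2 * k ≤ m) :
    (m + 1).choose k ≤ 2 * m.choose k := by
  cases k with
  | zero => simp
  | succ k =>
    have : m.choose k ≤ m.choose (k + 1) := Nat.choose_le_succ_of_lt_half_left (by omega)
    rw [Nat.choose_succ_succ']
    omega

theorem choose_add_le_two_pow_mul_choose {m k : ℕ} (h : 2 * k ≤ m) (s : ℕ) :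
    (m + s).choose k ≤ 2 ^ s * m.choose k := by
  induction s with
  | zero => simp
  | succ s ih =>
    calc (m + s + 1).choose k ≤ 2 * (m + s).choose k := choose_succ_le_two_mul_choose (by omega)
      _ ≤ 2 * (2 ^ s * m.choose k) := by gcongr
      _ = 2 ^ (s + 1) * m.choose k := by ring

theorem ballotNumber_succ_le (s n : ℕ) :
    ballotNumber (s + 1) n ≤ (s + 1) * 2 ^ s * ballotNumber 1 n := by
  refine Nat.le_of_mul_le_mul_left ?_ (show 0 < 2 * n + (s + 1) by omega)
  calc (2 * n + (s + 1)) * ballotNumber (s + 1) n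
      = (s + 1) * (2 * n + 1 + s).choose n := by rw [add_mul_ballotNumber]; congr 2; ring
    _ ≤ (s + 1) * (2 ^ s * (2 * n + 1).choose n) := by
        gcongr
        exact choose_add_le_two_pow_mul_choose (by omega) s
    _ = (2 * n + 1) * ((s + 1) * 2 ^ s * ballotNumber 1 n) := by
        rw [← one_mul ((2 * n + 1).choose n), ← add_mul_ballotNumber]
        ring
    _ ≤ (2 * n + (s + 1)) * ((s + 1) * 2 ^ s * ballotNumber 1 n) := by gcongr; omega

theorem add_one_mul_ballotNumber_one (n : ℕ) : (n + 1) * ballotNumber 1 n = n.centralBinom := by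
  apply Nat.eq_of_mul_eq_mul_left (show 0 < 2 * n + 1 by omega)
  have h := Nat.choose_mul_succ_eq (2 * n) n
  rw [show 2 * n + 1 - n = n + 1 by omega, ← Nat.centralBinom_eq_two_mul_choose] at h
  linear_combination (n + 1) * add_mul_ballotNumber 1 n - h

/-- The probability that a critical geometric Galton–Watson tree has at least `n` edges, defined by
its closed form; `tsum_forestProb_one` justifies the name. -/
noncomputable def treeTail (n : ℕ) : ℝ≥0 := n.centralBinom / 4 ^ n

theorem treeTail_zero : treeTail 0 = 1 := by simp [treeTail]

theorem treeTail_succ (n : ℕ) :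
    treeTail (n + 1) = treeTail n * ((2 * n + 1) / (2 * n + 2)) := by
  have h : ((n : ℝ≥0) + 1) * (n + 1).centralBinom = 2 * (2 * n + 1) * n.centralBinom :=
    mod_cast Nat.succ_mul_centralBinom_succ n
  unfold treeTail
  rw [pow_succ]
  field_simp
  linear_combination 2 * h

theorem treeTail_antitone : Antitone treeTail :=
  antitone_nat_of_succ_le fun n => by
    rw [treeTail_succ]
    exact mul_le_of_le_one_right (zero_le) (div_le_one_of_le₀ (by gcongr; norm_num) (zero_le))

theorem treeTail_sq_mul_le (n : ℕ) : treeTail n ^ 2 * (2 * n + 1) ≤ 1 := by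
  induction n with
  | zero => simp [treeTail]
  | succ n ih =>
    calc treeTail (n + 1) ^ 2 * (2 * (n + 1 : ℕ) + 1)
        = treeTail n ^ 2 * (2 * n + 1) * ((2 * n + 1) * (2 * n + 3) / (2 * n + 2) ^ 2) := by
          rw [treeTail_succ]
          push_cast
          field_simp
          ring
      _ ≤ 1 * 1 := by
          gcongr
          refine div_le_one_of_le₀ ?_ (by positivity)
          norm_cast
          nlinarith
      _ = 1 := one_mul 1

theorem treeTail_le_inv_sqrt (n : ℕ) : (treeTail n : ℝ) ≤ (√(2 * n + 1))⁻¹ := by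
  rw [← Real.sqrt_inv, ← one_div]
  apply Real.le_sqrt_of_sq_le
  rw [le_div_iff₀ (by positivity)]
  exact_mod_cast treeTail_sq_mul_le n

theorem tendsto_treeTail_atTop : Tendsto treeTail atTop (nhds 0) := by
  rw [← NNReal.tendsto_coe]
  refine squeeze_zero (fun n => NNReal.coe_nonneg _) treeTail_le_inv_sqrt ?_
  exact (Real.tendsto_sqrt_atTop.comp (tendsto_atTop_add_const_right _ _
    (tendsto_natCast_atTop_atTop.const_mul_atTop two_pos))).inv_tendsto_atTop

theorem tsum_eq_tsum_insertNth {s : ℕ} {α : Fin (s + 1) → Type*} (i : Fin (s + 1))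
    (F : (∀ j, α j) → ℝ≥0∞) :
    ∑' f, F f = ∑' (a : α i) (g : ∀ j, α (i.succAbove j)), F (i.insertNth a g) := by
  rw [← (Fin.insertNthEquiv α i).tsum_eq, ENNReal.tsum_prod']
  rfl

theorem tsum_prod_eq_prod_tsum {s : ℕ} {α : Fin s → Type*} (w : ∀ i, α i → ℝ≥0∞) :
    ∑' f : ∀ i, α i, ∏ i, w i (f i) = ∏ i, ∑' a, w i a := by
  induction s with
  | zero => simp
  | succ s ih =>
    rw [tsum_eq_tsum_insertNth 0]
    simp only [Fin.prod_univ_succAbove _ 0, Fin.insertNth_apply_same,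
      Fin.insertNth_apply_succAbove, ENNReal.tsum_mul_left, ENNReal.tsum_mul_right]
    rw [ih fun i => w (Fin.succAbove 0 i)]

namespace PTree

/-- The tree obtained from `t` by attaching `u` as a new first subtree of the root; the inverse
operation drives the recursion for forests. -/
def graft (u : PTree) : PTree → PTree
  | .node ts => .node (u :: ts)

theorem edges_graft (u t : PTree) : (graft u t).edges = u.edges + t.edges + 1 := by
  cases t
  simp only [graft, edges, edgesList, List.length_cons]
  ring

theorem edges_leaf : (node []).edges = 0 := by simp [edges, edgesList]

/-- A plane tree is either a single vertex, or is obtained by grafting in a unique way. This is what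
reduces sums over trees to sums over pairs of trees. -/
def decompose : Unit ⊕ PTree × PTree ≃ PTree where
  toFun
    | .inl _ => .node []
    | .inr (u, t) => graft u t
  invFun
    | .node [] => .inl ()
    | .node (u :: ts) => .inr (u, .node ts)
  left_inv := by rintro (_ | ⟨u, ⟨ts⟩⟩) <;> rfl
  right_inv := by rintro ⟨_ | ⟨u, ts⟩⟩ <;> rfl

theorem tsum_eq_leaf_add_graft (F : PTree → ℝ≥0∞) :
    ∑' t, F t = F (.node []) + ∑' (u : PTree) (t : PTree), F (graft u t) := by
  rw [← decompose.tsum_eq, Summable.tsum_sum ENNReal.summable ENNReal.summable, tsum_fintype,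
    ENNReal.tsum_prod']
  simp [decompose]

end PTree

theorem gwProb_leaf : gwProb (.node []) = 2⁻¹ := by simp [gwProb, gwProbList]

theorem gwProb_graft (u t : PTree) : gwProb (u.graft t) = 2⁻¹ * gwProb u * gwProb t := by
  cases t
  simp only [PTree.graft, gwProb, gwProbList, List.length_cons]
  ring

/-- The total number of edges of a forest, written as an inline sum in `condProbUniqueBig`. -/
def forestEdges {s : ℕ} (f : Fin s → PTree) : ℕ := ∑ i, (f i).edges

theorem forestEdges_insertNth {s : ℕ} (i : Fin (s + 1)) (t : PTree) (f : Fin s → PTree) :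
    forestEdges (i.insertNth t f : Fin (s + 1) → PTree) = t.edges + forestEdges f := by
  simp [forestEdges, Fin.sum_univ_succAbove _ i]

theorem forestMass_insertNth {s : ℕ} (i : Fin (s + 1)) (t : PTree) (f : Fin s → PTree) :
    forestMass (i.insertNth t f : Fin (s + 1) → PTree) = gwProb t * forestMass f := by
  simp [forestMass, Fin.prod_univ_succAbove _ i]

/-- The probability that `s` independent critical geometric Galton–Watson trees have `n` edges in
total. -/
noncomputable def forestProb (s n : ℕ) : ℝ≥0∞ :=
  ∑' f : Fin s → PTree, if forestEdges f = n then forestMass f else 0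

theorem forestProb_succ (s n : ℕ) :
    forestProb (s + 1) n = 2⁻¹ * (forestProb s n +
      ∑' f : Fin (s + 2) → PTree, if forestEdges f + 1 = n then forestMass f else 0) := by
  unfold forestProb
  rw [tsum_eq_tsum_insertNth 0, PTree.tsum_eq_leaf_add_graft, tsum_eq_tsum_insertNth 0 (s := s + 1)]
  simp only [tsum_eq_tsum_insertNth 0 (s := s), forestEdges_insertNth, forestMass_insertNth,
    PTree.edges_leaf, PTree.edges_graft, gwProb_leaf, gwProb_graft, zero_add, mul_add,
    ← ENNReal.tsum_mul_left, mul_ite, mul_zero, mul_assoc,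
    add_assoc, add_comm 1]

theorem forestProb_succ_zero (s : ℕ) : forestProb (s + 1) 0 = 2⁻¹ * forestProb s 0 := by
  simp [forestProb_succ]

theorem forestProb_succ_succ (s n : ℕ) :
    forestProb (s + 1) (n + 1) = 2⁻¹ * (forestProb s (n + 1) + forestProb (s + 2) n) := by
  rw [forestProb_succ]
  simp only [forestProb, add_left_inj]

theorem forestProb_zero_left (n : ℕ) : forestProb 0 n = if n = 0 then 1 else 0 := by
  simp [forestProb, forestEdges, forestMass, eq_comm]

theorem forestProb_eq_ballotNumber (s n : ℕ) :
    forestProb s n = ballotNumber s n * 2⁻¹ ^ (2 * n + s) := by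
  fun_induction ballotNumber s n with
  | case1 s =>
    induction s with
    | zero => simp [forestProb_zero_left]
    | succ s ih =>
      rw [forestProb_succ_zero, ih]
      ring
  | case2 => simp [forestProb_zero_left]
  | case3 s n ih₁ ih₂ =>
    rw [forestProb_succ_succ, ih₁, ih₂]
    simp only [Nat.succ_eq_add_one, Nat.cast_add]
    ring

theorem forestProb_succ_ne_zero (s n : ℕ) : forestProb (s + 1) n ≠ 0 := by
  simp [forestProb_eq_ballotNumber, (ballotNumber_succ_pos s n).ne']

theorem forestProb_ne_top (s n : ℕ) : forestProb s n ≠ ⊤ := by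
  rw [forestProb_eq_ballotNumber]
  exact ENNReal.mul_ne_top (ENNReal.natCast_ne_top _) (by simp)

theorem forestProb_succ_le (s n : ℕ) : forestProb (s + 1) n ≤ (s + 1) * forestProb 1 n := by
  have h : (ballotNumber (s + 1) n : ℝ≥0∞) ≤ (s + 1) * 2 ^ s * ballotNumber 1 n :=
    mod_cast ballotNumber_succ_le s n
  rw [forestProb_eq_ballotNumber, forestProb_eq_ballotNumber]
  calc (ballotNumber (s + 1) n : ℝ≥0∞) * 2⁻¹ ^ (2 * n + (s + 1))
      ≤ (s + 1) * 2 ^ s * ballotNumber 1 n * 2⁻¹ ^ (2 * n + (s + 1)) := by gcongr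
    _ = (s + 1) * (ballotNumber 1 n * 2⁻¹ ^ (2 * n + 1)) * (2 * 2⁻¹) ^ s := by ring
    _ = (s + 1) * (ballotNumber 1 n * 2⁻¹ ^ (2 * n + 1)) := by
      rw [ENNReal.mul_inv_cancel two_ne_zero ENNReal.ofNat_ne_top, one_pow, mul_one]

theorem forestProb_le (s : ℕ) {n : ℕ} (hn : n ≠ 0) : forestProb s n ≤ s * forestProb 1 n := by
  cases s with
  | zero => simp [forestProb_zero_left, hn]
  | succ s => exact_mod_cast forestProb_succ_le s n

theorem forestProb_one (n : ℕ) : forestProb 1 n = (treeTail n / (2 * n + 2) : ℝ≥0) := by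
  have h : ((n : ℝ≥0) + 1) * ballotNumber 1 n = n.centralBinom :=
    mod_cast add_one_mul_ballotNumber_one n
  have : (ballotNumber 1 n * 2⁻¹ ^ (2 * n + 1) : ℝ≥0) = treeTail n / (2 * n + 2) := by
    rw [treeTail, ← h, pow_succ, pow_mul, inv_pow, show (2 : ℝ≥0) ^ 2 = 4 by norm_num, inv_pow]
    field_simp
  rw [forestProb_eq_ballotNumber, ← this]
  push_cast
  simp

theorem forestProb_one_antitone : Antitone (forestProb 1) := by
  intro m n h
  rw [forestProb_one, forestProb_one]
  gcongr
  exact treeTail_antitone h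

theorem forestProb_one_add_treeTail (n : ℕ) : forestProb 1 n + treeTail (n + 1) = treeTail n := by
  rw [forestProb_one, treeTail_succ]
  rw [← ENNReal.coe_add, ENNReal.coe_inj]
  field_simp
  ring

theorem sum_forestProb_one_add_treeTail (M k : ℕ) :
    ∑ m ∈ Finset.range k, forestProb 1 (M + m) + treeTail (M + k) = treeTail M := by
  induction k with
  | zero => simp
  | succ k ih =>
    rw [Finset.sum_range_succ, add_assoc, ← add_assoc M, forestProb_one_add_treeTail, ih]

theorem tsum_forestProb_one (M : ℕ) : ∑' m, forestProb 1 (M + m) = treeTail M := by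
  have tail_vanishes : Tendsto (fun k => (treeTail (M + k) : ℝ≥0∞)) atTop (nhds (0 : ℝ≥0)) :=
    ENNReal.tendsto_coe.2 <| tendsto_treeTail_atTop.comp <|
      tendsto_atTop_mono (fun k => Nat.le_add_left k M) tendsto_id
  have lim := (ENNReal.tendsto_nat_tsum fun m => forestProb 1 (M + m)).add tail_vanishes
  simp only [sum_forestProb_one_add_treeTail] at lim
  simpa using tendsto_nhds_unique lim tendsto_const_nhds

theorem tsum_forestProb (s : ℕ) : ∑' n, forestProb s n = (∑' t, gwProb t) ^ s := by
  unfold forestProb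
  rw [ENNReal.tsum_comm]
  calc ∑' (f : Fin s → PTree) (n : ℕ), (if forestEdges f = n then forestMass f else 0)
      = ∑' f : Fin s → PTree, forestMass f := tsum_congr fun f => tsum_ite_eq' _ _
    _ = ∏ _ : Fin s, ∑' t, gwProb t := tsum_prod_eq_prod_tsum fun _ => gwProb
    _ = (∑' t, gwProb t) ^ s := by simp

theorem tsum_gwProb : ∑' t, gwProb t = 1 := by
  simpa [tsum_forestProb, treeTail_zero] using tsum_forestProb_one 0

theorem tsum_forestProb_eq_one (s : ℕ) : ∑' n, forestProb s n = 1 := by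
  rw [tsum_forestProb, tsum_gwProb, one_pow]

theorem one_le_sum_forestProb_add (s k : ℕ) :
    1 ≤ ∑ m ∈ Finset.range (k + 1), forestProb s m + s * treeTail (k + 1) := by
  rw [← tsum_forestProb_eq_one s,
    ← Summable.sum_add_tsum_nat_add' (k := k + 1) ENNReal.summable, ← tsum_forestProb_one,
    ← ENNReal.tsum_mul_left]
  gcongr with m
  rw [add_comm m]
  exact forestProb_le s (by omega)

theorem sum_range_forestProb (s k : ℕ) :
    ∑ m ∈ Finset.range (k + 1), forestProb s m =
      ∑' f : Fin s → PTree, if forestEdges f ≤ k then forestMass f else 0 := by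
  unfold forestProb
  rw [← Summable.tsum_finsetSum fun _ _ => ENNReal.summable]
  simp only [Finset.sum_ite_eq, Finset.mem_range_succ_iff]

theorem forestProb_one_eq_tsum (n : ℕ) :
    forestProb 1 n = ∑' t : PTree, if t.edges = n then gwProb t else 0 := by
  simp [forestProb, tsum_eq_tsum_insertNth 0, forestEdges, forestMass]

/-- The probability that `s` independent critical geometric Galton–Watson trees have `n` edges in
total, all but at most `k` of them in the tree with index `i`. -/
noncomputable def bigTreeProb {s : ℕ} (i : Fin s) (n k : ℕ) : ℝ≥0∞ :=
  ∑' f : Fin s → PTree, if n ≤ (f i).edges + k ∧ forestEdges f = n then forestMass f else 0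

theorem forestProb_one_mul_sum_le_bigTreeProb {s n k : ℕ} (hk : k ≤ n) (i : Fin (s + 1)) :
    forestProb 1 n * ∑ m ∈ Finset.range (k + 1), forestProb s m ≤ bigTreeProb i n k := by
  unfold bigTreeProb
  rw [sum_range_forestProb, tsum_eq_tsum_insertNth i, ENNReal.tsum_comm, ← ENNReal.tsum_mul_left]
  refine ENNReal.tsum_le_tsum fun g => ?_
  simp only [Fin.insertNth_apply_same, forestEdges_insertNth, forestMass_insertNth]
  split_ifs with hg
  · calc forestProb 1 n * forestMass g
        ≤ forestProb 1 (n - forestEdges g) * forestMass g := by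
          gcongr
          exact forestProb_one_antitone (Nat.sub_le _ _)
      _ = ∑' t : PTree, if t.edges = n - forestEdges g then gwProb t * forestMass g else 0 := by
          simp only [forestProb_one_eq_tsum, ← ENNReal.tsum_mul_right, ite_mul, zero_mul]
      _ ≤ _ := by
        refine ENNReal.tsum_le_tsum fun t => ?_
        by_cases ht : t.edges = n - forestEdges g
        · rw [if_pos ht, if_pos (by omega)]
        · simp [ht]
  · simp

/-- The probability that `s` independent critical geometric Galton–Watson trees have `n` edges in
total, all but at most `k` of them in a single tree whose index is unique. -/
noncomputable def uniqueBigTreeProb (s n k : ℕ) : ℝ≥0∞ :=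
  ∑' f : Fin s → PTree,
    if (∃! i, n ≤ (f i).edges + k) ∧ forestEdges f = n then forestMass f else 0

theorem index_eq_of_le_edges_add {s n k : ℕ} (hk : 2 * k < n) {f : Fin s → PTree}
    (hf : forestEdges f = n) {i j : Fin s} (hi : n ≤ (f i).edges + k)
    (hj : n ≤ (f j).edges + k) : i = j := by
  by_contra hij
  have : (f i).edges + (f j).edges ≤ n := by
    rw [← hf, forestEdges, ← Finset.sum_pair (f := fun l => (f l).edges) hij]
    exact Finset.sum_le_sum_of_subset (Finset.subset_univ _)
  omega

theorem sum_bigTreeProb_le_uniqueBigTreeProb {s n k : ℕ} (hk : 2 * k < n) :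
    ∑ i : Fin s, bigTreeProb i n k ≤ uniqueBigTreeProb s n k := by
  unfold bigTreeProb uniqueBigTreeProb
  rw [← Summable.tsum_finsetSum fun _ _ => ENNReal.summable]
  refine ENNReal.tsum_le_tsum fun f => ?_
  by_cases h : ∃ i, n ≤ (f i).edges + k ∧ forestEdges f = n
  · obtain ⟨i, hi, hf⟩ := h
    have unique (j : Fin s) (hj : n ≤ (f j).edges + k) : j = i :=
      index_eq_of_le_edges_add hk hf hj hi
    rw [if_pos ⟨⟨i, hi, unique⟩, hf⟩,
      Fintype.sum_eq_single i fun j hji => if_neg fun hj => hji (unique j hj.1)]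
    exact (if_pos ⟨hi, hf⟩).le
  · push Not at h
    rw [Finset.sum_eq_zero fun i _ => if_neg fun hi => h i hi.1 hi.2]
    exact zero_le

theorem one_sub_mul_le_natCast_iff {δ : ℝ} (hδ : 0 ≤ δ) (n e : ℕ) :
    (1 - δ) * n ≤ e ↔ n ≤ e + ⌊δ * n⌋₊ := by
  rw [add_comm, ← Nat.floor_add_natCast (by positivity), Nat.le_floor_iff (by positivity),
    one_sub_mul, sub_le_iff_le_add']

theorem condProbUniqueBig_eq_div {δ : ℝ} (hδ : 0 ≤ δ) (s n : ℕ) :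
    condProbUniqueBig s n δ = uniqueBigTreeProb s n ⌊δ * n⌋₊ / forestProb s n := by
  simp only [condProbUniqueBig, uniqueBigTreeProb, forestProb, forestEdges,
    one_sub_mul_le_natCast_iff hδ]
  congr!

theorem condProbUniqueBig_le_one (s n : ℕ) (δ : ℝ) : condProbUniqueBig s n δ ≤ 1 := by
  refine ENNReal.div_le_of_le_mul ?_
  rw [one_mul]
  refine ENNReal.tsum_le_tsum fun f => ?_
  split_ifs <;> simp_all

theorem one_le_condProbUniqueBig_add {n : ℕ} {δ : ℝ} (hn : 0 < n) (hδ₀ : 0 ≤ δ) (hδ : δ < 1 / 2)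
    (s : ℕ) : 1 ≤ condProbUniqueBig (s + 1) n δ + s * treeTail (⌊δ * n⌋₊ + 1) := by
  set k := ⌊δ * n⌋₊
  have two_mul_k_lt : 2 * k < n := by
    have : (n : ℝ) > 0 := mod_cast hn
    have : (k : ℝ) ≤ δ * n := Nat.floor_le (by positivity)
    have : (2 * k : ℝ) < n := by nlinarith
    exact_mod_cast this
  refine (one_le_sum_forestProb_add s k).trans ?_
  gcongr
  rw [condProbUniqueBig_eq_div hδ₀, ENNReal.le_div_iff_mul_le (Or.inl (forestProb_succ_ne_zero s n))
    (Or.inl (forestProb_ne_top _ _))]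
  calc (∑ m ∈ Finset.range (k + 1), forestProb s m) * forestProb (s + 1) n
      ≤ (∑ m ∈ Finset.range (k + 1), forestProb s m) * ((s + 1) * forestProb 1 n) := by
        gcongr
        exact forestProb_succ_le s n
    _ = ∑ _ : Fin (s + 1), forestProb 1 n * ∑ m ∈ Finset.range (k + 1), forestProb s m := by
        rw [Finset.sum_const, Finset.card_univ, Fintype.card_fin, nsmul_eq_mul]
        push_cast
        ring
    _ ≤ ∑ i : Fin (s + 1), bigTreeProb i n k :=
        Finset.sum_le_sum fun i _ => forestProb_one_mul_sum_le_bigTreeProb (by omega) i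
    _ ≤ uniqueBigTreeProb (s + 1) n k := sum_bigTreeProb_le_uniqueBigTreeProb two_mul_k_lt

theorem treeTail_floor_add_one_le {x : ℝ} (hx : 0 < x) : (treeTail (⌊x⌋₊ + 1) : ℝ) ≤ (√x)⁻¹ := by
  refine (treeTail_le_inv_sqrt _).trans ?_
  gcongr
  have := Nat.lt_floor_add_one x
  push_cast
  linarith

theorem one_sub_div_sqrt_le_condProbUniqueBig {σ n : ℕ} {δ : ℝ} (hσ : 0 < σ) (hn : 0 < n)
    (hδ₀ : 0 < δ) (hδ : δ < 1 / 2) :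
    1 - ENNReal.ofReal (σ / √(δ * n)) ≤ condProbUniqueBig σ n δ := by
  obtain ⟨s, rfl⟩ := Nat.exists_eq_add_one.2 hσ
  have tail_le : s * (treeTail (⌊δ * n⌋₊ + 1) : ℝ≥0∞) ≤
      ENNReal.ofReal ((s + 1 : ℕ) / √(δ * n)) := by
    rw [← ENNReal.ofReal_natCast, ← ENNReal.ofReal_coe_nnreal, ← ENNReal.ofReal_mul (by positivity),
      div_eq_mul_inv]
    gcongr
    · omega
    · exact treeTail_floor_add_one_le (by positivity)
  rw [tsub_le_iff_right]
  exact (one_le_condProbUniqueBig_add hn hδ₀.le hδ s).trans (by gcongr)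

theorem unique_big_tree_general (σ : ℕ → ℕ) (δ : ℕ → ℝ) (hpos : ∀ᶠ n in atTop, 0 < σ n)
    (hδ₀ : ∀ᶠ n in atTop, 0 < δ n) (hδ : ∀ᶠ n in atTop, δ n < 1 / 2)
    (hσ : Tendsto (fun n => (σ n : ℝ) / √(δ n * n)) atTop (nhds 0)) :
    Tendsto (fun n => condProbUniqueBig (σ n) n (δ n)) atTop (nhds 1) := by
  have lower : Tendsto (fun n => 1 - ENNReal.ofReal (σ n / √(δ n * n))) atTop (nhds 1) := by
    simpa using ENNReal.Tendsto.sub tendsto_const_nhds (ENNReal.tendsto_ofReal hσ)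
      (Or.inl ENNReal.one_ne_top)
  refine tendsto_of_tendsto_of_tendsto_of_le_of_le' lower tendsto_const_nhds ?_
    (Eventually.of_forall fun n => condProbUniqueBig_le_one _ _ _)
  filter_upwards [hpos, hδ₀, hδ, eventually_gt_atTop 0] with n hσn hδ₀n hδn hn
  exact one_sub_div_sqrt_le_condProbUniqueBig hσn hn hδ₀n hδn

/-- If `σ_n = o(√n)`, then conditionally on the total size being `n`, with probability tending
to `1` (first `n → ∞`, then `δ ↓ 0`) there is a unique tree of size at least `(1-δ)n`. -/
theorem unique_big_tree (σ : ℕ → ℕ) (hpos : ∀ n, 0 < σ n)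
    (hσ : Tendsto (fun n => (σ n : ℝ) / Real.sqrt n) atTop (nhds 0)) :
    ∀ ε : ℝ≥0∞, 0 < ε → ∃ δ₀ : ℝ, 0 < δ₀ ∧ ∀ δ : ℝ, 0 < δ → δ < δ₀ →
      ∀ᶠ n in atTop, 1 - ε ≤ condProbUniqueBig (σ n) n δ := by
  refine fun ε hε => ⟨1 / 2, by norm_num, fun δ hδ₀ hδ => ?_⟩
  have hσδ : Tendsto (fun n => (σ n : ℝ) / √(δ * n)) atTop (nhds 0) := by
    simpa [Real.sqrt_mul hδ₀.le, div_mul_eq_div_div_swap] using hσ.div_const √δ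
  have lim := unique_big_tree_general σ (fun _ => δ) (.of_forall hpos) (.of_forall fun _ => hδ₀)
    (.of_forall fun _ => hδ) hσδ
  exact lim.eventually_const_le (ENNReal.sub_lt_self ENNReal.one_ne_top one_ne_zero hε.ne')
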